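/- arXiv:1310.2189 — 2 statements merged into one kernel-verified Lean document; each statement's English description precedes it below -/
import Mathlib

section
/- Let k be a number field containing a square root of −1 (i.e., there exists i ∈ k with i² = −1). Consider the polynomial S(T) = 1 + 84375·T⁴ ∈ k[T] (where 84375 = 5⁵·3³). Then S(T) is irreducible over k if and only if 15 is not a square in k (i.e., there is no x ∈ k with x² = 15). -/
open Polynomial

/-- Over a field containing a square root of `-1`, the polynomial `X ^ 4 - a` is irreducible if and
only if `a` is not a square. -/
theorem X_pow_four_sub_C_irreducible_iff_of_sq_eq_neg_one {K : Type*} [Field K] {i : K}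
    (hi : i ^ 2 = -1) {a : K} :
    Irreducible (X ^ 4 - C a) ↔ ∀ b : K, b ^ 2 ≠ a := by
  refine ⟨fun h ↦ pow_ne_of_irreducible_X_pow_sub_C h (by norm_num) (by norm_num), fun ha ↦ ?_⟩
  refine X_pow_mul_sub_C_irreducible (n := 2) (m := 2)
    (X_pow_sub_C_irreducible_of_prime Nat.prime_two ha) fun E _ _ x hx ↦ ?_
  have hint : IsIntegral K x := minpoly.ne_zero_iff.mp (hx ▸ X_pow_sub_C_ne_zero two_pos a)
  refine X_pow_sub_C_irreducible_of_prime Nat.prime_two fun b hb ↦ ha (i * Algebra.norm K b) ?_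
  rw [mul_pow, hi, ← map_pow, hb, ← IntermediateField.adjoin.powerBasis_gen hint,
    Algebra.PowerBasis.norm_gen_eq_coeff_zero_minpoly]
  simp [IntermediateField.minpoly_gen, hx]

/-- §4.3(b): let `k` be a number field containing a square root of `-1`, and
`S(T) = 1 + 84375 T⁴` (with `84375 = 5⁵·3³`). Then `S` is irreducible over `k` if and only if
`15` is not a square in `k`. -/
theorem stmt_15 (k : Type*) [Field k] [NumberField k]
    (i : k) (hi : i ^ 2 = -1) :
    Irreducible (1 + Polynomial.C (84375 : k) * Polynomial.X ^ 4) ↔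
      ¬ ∃ x : k, x ^ 2 = 15 := by
  have hS : (1 + C (84375 : k) * X ^ 4) = C 84375 * (X ^ 4 - C (-1 / 84375)) := by
    rw [mul_sub, ← C_mul, mul_div_cancel₀ _ (by norm_num), C_neg, C_1]
    ring
  have hunit : IsUnit (C (84375 : k)) := isUnit_C.mpr (IsUnit.mk0 _ (by norm_num))
  rw [hS, irreducible_isUnit_mul hunit, X_pow_four_sub_C_irreducible_iff_of_sq_eq_neg_one hi,
    not_exists]
  refine ⟨fun h x hx ↦ h (i * x / 1125) ?_, fun h b hb ↦ h (1125 * i * b) ?_⟩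
  · rw [div_pow, mul_pow, hi, hx]
    norm_num
  · rw [mul_pow, mul_pow, hi, hb]
    norm_num
end

section
/- Let k be a number field containing a square root of −1 (i.e., there exists i ∈ k with i² = −1). Consider the polynomial S(T) = 1 + 84375·T⁴ ∈ k[T] (where 84375 = 5⁵·3³). Then S(T) is a product of two irreducible quadratic polynomials in k[T] if and only if there exists z ∈ k with z² = −375 and z is not a square in k (i.e., there is no w ∈ k with w² = z). -/
open Polynomial

/-- An irreducible quadratic over a field has no root. -/
theorem Irreducible.not_isRoot_of_natDegree_eq_two {k : Type*} [Field k] {f : k[X]}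
    (hf : Irreducible f) (hdeg : f.natDegree = 2) (t : k) : ¬ f.IsRoot t := fun ht => by
  have h : f.natDegree = 1 :=
    natDegree_eq_of_degree_eq_some (degree_eq_one_of_irreducible_of_root hf ht)
  omega

theorem natDegree_one_add_C_mul_X_sq {k : Type*} [Field k] {a : k} (ha : a ≠ 0) :
    (1 + C a * X ^ 2 : k[X]).natDegree = 2 := by
  compute_degree!

/-- The quadratic `1 + a T²` is irreducible as soon as it has no root. -/
theorem irreducible_one_add_C_mul_X_sq {k : Type*} [Field k] {a : k} (ha : a ≠ 0)
    (h : ∀ t : k, 1 + a * t ^ 2 ≠ 0) : Irreducible (1 + C a * X ^ 2 : k[X]) := by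
  have hdeg := natDegree_one_add_C_mul_X_sq ha
  rw [irreducible_iff_roots_eq_zero_of_degree_le_three hdeg.ge (by omega)]
  refine Multiset.eq_zero_of_forall_notMem fun t ht => h t ?_
  simpa using isRoot_of_mem_roots ht

/-- If `1 + d T⁴` is a product of two quadratics, then `d` or `-d` is a square. -/
theorem exists_sq_eq_or_neg_of_one_add_C_mul_X_pow_four_eq_mul {k : Type*} [Field k] {d : k}
    (hd : d ≠ 0) {f g : k[X]} (hf : f.natDegree = 2) (hg : g.natDegree = 2)
    (h : 1 + C d * X ^ 4 = f * g) : ∃ y : k, y ^ 2 = d ∨ y ^ 2 = -d := by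
  rw [f.as_sum_range_C_mul_X_pow, g.as_sum_range_C_mul_X_pow, hf, hg] at h
  simp only [Finset.sum_range_succ, Finset.sum_range_zero, zero_add, pow_zero, pow_one,
    mul_one] at h
  generalize f.coeff 0 = c, f.coeff 1 = b, f.coeff 2 = a,
    g.coeff 0 = c', g.coeff 1 = b', g.coeff 2 = a' at h
  have hprod : (C c + C b * X + C a * X ^ 2) * (C c' + C b' * X + C a' * X ^ 2) =
      C (c * c') + C (b * c' + c * b') * X + C (a * c' + b * b' + c * a') * X ^ 2 +
        C (a * b' + b * a') * X ^ 3 + C (a * a') * X ^ 4 := by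
    simp only [C_add, C_mul]
    ring
  rw [hprod] at h
  have h0 := congrArg (coeff · 0) h
  have h1 := congrArg (coeff · 1) h
  have h2 := congrArg (coeff · 2) h
  have h3 := congrArg (coeff · 3) h
  have h4 := congrArg (coeff · 4) h
  simp [coeff_X, coeff_one, coeff_X_pow, -map_add, -map_mul, coeff_C] at h0 h1 h2 h3 h4
  refine ⟨a * c', ?_⟩
  by_cases hb : b = 0
  · right
    have ha : a ≠ 0 := by rintro rfl; simp [h4] at hd
    grind
  · left
    have : b * (a * c' - a' * c) = 0 := by linear_combination -a * h1 + c * h3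
    grind

/-- §4.3(b): let `k` be a number field containing a square root of `-1`, and
`S(T) = 1 + 84375 T⁴` (with `84375 = 5⁵·3³`). Then `S` is a product of two irreducible
quadratic polynomials over `k` if and only if there is `z ∈ k` with `z² = -375`
(i.e. `z = 5i√15`) which is not a square in `k`. -/
theorem stmt_16 (k : Type*) [Field k] [NumberField k]
    (i : k) (hi : i ^ 2 = -1) :
    (∃ f g : Polynomial k, f.natDegree = 2 ∧ g.natDegree = 2 ∧
        Irreducible f ∧ Irreducible g ∧
        1 + Polynomial.C (84375 : k) * Polynomial.X ^ 4 = f * g) ↔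
      ∃ z : k, z ^ 2 = -375 ∧ ¬ ∃ w : k, w ^ 2 = z := by
  constructor
  · rintro ⟨f, g, hf, hg, hfi, hgi, h⟩
    obtain ⟨z, hz⟩ : ∃ z : k, z ^ 2 = -375 := by
      obtain ⟨y, hy | hy⟩ :=
        exists_sq_eq_or_neg_of_one_add_C_mul_X_pow_four_eq_mul (by norm_num) hf hg h
      · exact ⟨i * y / 15, by linear_combination (y ^ 2 * hi - hy) / 225⟩
      · exact ⟨y / 15, by linear_combination hy / 225⟩
    refine ⟨z, hz, ?_⟩
    rintro ⟨w, rfl⟩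
    have hw : w ≠ 0 := by rintro rfl; simp at hz
    have hroot : (f * g).IsRoot (5 / (i * w ^ 3)) := by
      rw [← h]
      have hi0 : i ≠ 0 := by rintro rfl; simp at hi
      simp only [IsRoot.def, eval_add, eval_one, eval_mul, eval_C, eval_pow, eval_X]
      field_simp
      grind
    rcases root_mul.mp hroot with hr | hr
    · exact hfi.not_isRoot_of_natDegree_eq_two hf _ hr
    · exact hgi.not_isRoot_of_natDegree_eq_two hg _ hr
  · rintro ⟨z, hz, hns⟩
    have hz0 : z ≠ 0 := by rintro rfl; simp at hz
    have ha : 15 * z ≠ 0 := mul_ne_zero (by norm_num) hz0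
    have ha' : -(15 * z) ≠ 0 := neg_ne_zero.mpr ha
    refine ⟨1 + C (15 * z) * X ^ 2, 1 + C (-(15 * z)) * X ^ 2,
      natDegree_one_add_C_mul_X_sq ha, natDegree_one_add_C_mul_X_sq ha',
      irreducible_one_add_C_mul_X_sq ha fun t ht => hns ⟨5 / (z * t), ?_⟩,
      irreducible_one_add_C_mul_X_sq ha' fun t ht => hns ⟨5 / (i * z * t), ?_⟩, ?_⟩
    · have ht0 : t ≠ 0 := by rintro rfl; simp at ht
      field_simp
      grind
    · have ht0 : t ≠ 0 := by rintro rfl; simp at ht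
      have hi0 : i ≠ 0 := by rintro rfl; simp at hi
      field_simp
      grind
    · have hC : (84375 : k) = -(15 * z) * (15 * z) := by linear_combination 225 * hz
      rw [hC]
      simp only [C_mul, C_neg]
      ring
end
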